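/- For every odd positive integer k and every α ∈ (0,1), the integral I_{k,α} := ∫₀^{π/2} sin(kθ) / (sin θ)^{2α} dθ equals (√π / 2) · Γ(1-α) Γ(α + k/2) / (Γ(α + 1/2) Γ(1 - α + k/2)). -/

import Mathlib

open Real intervalIntegral

/-!
Write `I k` for the integral. Since `sin ((k + 2) θ)` and `sin (k θ)` are the sum and the difference
of `sin ((k + 1) θ) cos θ` and `cos ((k + 1) θ) sin θ`, the derivative of
`sin ((k + 1) θ) (sin θ) ^ (1 - 2 α)` is a combination of the integrands of `I (k + 2)` and `I k`.
Integrating it gives a two-term recurrence valid for every real `k`, with inhomogeneous term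
`sin ((k + 1) π / 2)`, which vanishes for odd `k`. The Gamma quotient satisfies the same recurrence,
and `I 1` is a Beta integral through the substitution `x = sin² θ`.
-/

section

open Set Filter MeasureTheory Topology ProbabilityTheory

theorem integral_rpow_mul_one_sub_rpow {a b : ℝ} (ha : 0 < a) (hb : 0 < b) :
    ∫ x in (0 : ℝ)..1, x ^ (a - 1) * (1 - x) ^ (b - 1) = beta a b := by
  apply Complex.ofReal_injective
  calc ((∫ x in (0 : ℝ)..1, x ^ (a - 1) * (1 - x) ^ (b - 1) : ℝ) : ℂ)
      = Complex.betaIntegral a b := by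
        rw [Complex.betaIntegral, ← intervalIntegral.integral_ofReal]
        refine integral_congr_Ioo_of_le zero_le_one fun x hx ↦ ?_
        push_cast [Complex.ofReal_cpow hx.1.le, Complex.ofReal_cpow (sub_nonneg.2 hx.2.le)]
        rfl
    _ = (beta a b : ℂ) := by
        rw [Complex.betaIntegral_eq_Gamma_mul_div _ _ (by simpa) (by simpa), beta]
        push_cast [← Complex.Gamma_ofReal]
        rfl

theorem Ioo_zero_pi_div_two_subset : Ioo 0 (π / 2) ⊆ Ioo 0 π :=
  Ioo_subset_Ioo_right (half_le_self pi_pos.le)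

theorem integral_sin_rpow_mul_cos_rpow {a b : ℝ} (ha : 0 < a) (hb : 0 < b) :
    ∫ θ in (0 : ℝ)..(π / 2), sin θ ^ (2 * a - 1) * cos θ ^ (2 * b - 1) = beta a b / 2 := by
  have trig_pos {θ : ℝ} (hθ : θ ∈ Ioo 0 (π / 2)) : 0 < sin θ ∧ 0 < cos θ :=
    ⟨sin_pos_of_mem_Ioo (Ioo_zero_pi_div_two_subset hθ),
      cos_pos_of_mem_Ioo ⟨by linarith [hθ.1, hθ.2], hθ.2⟩⟩
  have substitution :
      ∫ θ in (0 : ℝ)..(π / 2), ((fun x ↦ x ^ (a - 1) * (1 - x) ^ (b - 1)) ∘ fun θ ↦ sin θ ^ 2) θ *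
        (2 * sin θ * cos θ) = beta a b := by
    rw [integral_comp_mul_deriv_of_deriv_nonneg (by fun_prop)]
    · simpa using integral_rpow_mul_one_sub_rpow ha hb
    · intro θ _
      simpa using (hasDerivAt_sin θ).fun_pow 2
    · intro θ hθ
      rw [min_eq_left pi_div_two_pos.le, max_eq_right pi_div_two_pos.le] at hθ
      obtain ⟨hsin, hcos⟩ := trig_pos hθ
      positivity
  rw [eq_div_iff two_ne_zero, ← substitution, ← intervalIntegral.integral_mul_const]
  refine integral_congr_Ioo_of_le pi_div_two_pos.le fun θ hθ ↦ ?_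
  obtain ⟨hsin, hcos⟩ := trig_pos hθ
  have rpow_double {x : ℝ} (hx : 0 < x) (c : ℝ) : x ^ (2 * c - 1) = (x ^ 2) ^ (c - 1) * x := by
    rw [← rpow_natCast_mul hx.le, ← rpow_add_one hx.ne']
    congr 1
    push_cast
    ring
  simp only [Function.comp_apply, rpow_double hsin, rpow_double hcos, ← cos_sq']
  ring

theorem sinc_pos {x : ℝ} (hx : |x| < π) : 0 < sinc x := by
  obtain ⟨hneg, hpos⟩ := abs_lt.1 hx
  rcases lt_trichotomy x 0 with h | rfl | h
  · rw [sinc_of_ne_zero h.ne]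
    exact div_pos_of_neg_of_neg (sin_neg_of_neg_of_neg_pi_lt h hneg) h
  · simp
  · rw [sinc_of_ne_zero h.ne']
    exact div_pos (sin_pos_of_pos_of_lt_pi h hpos) h

theorem mul_sinc (x : ℝ) : x * sinc x = sin x := by
  rcases eq_or_ne x 0 with rfl | hx
  · simp
  · rw [sinc_of_ne_zero hx, mul_div_cancel₀ _ hx]

/-- This splits off the singularity at `0` as a pure power of `θ`: the other factor is continuous on
`(-π, π)`. -/
theorem sin_mul_mul_sin_rpow {θ : ℝ} (hθ : θ ∈ Ioo 0 π) (k s : ℝ) :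
    sin (k * θ) * sin θ ^ s = θ ^ (1 + s) * (k * sinc (k * θ) * sinc θ ^ s) := by
  have hsinc : 0 < sinc θ := sinc_pos (by simpa only [abs_of_pos hθ.1] using hθ.2)
  rw [← mul_sinc (k * θ), ← mul_sinc θ, mul_rpow hθ.1.le hsinc.le, rpow_add hθ.1, rpow_one]
  ring

theorem continuousOn_sinc_mul_sinc_rpow (k s : ℝ) :
    ContinuousOn (fun θ ↦ k * sinc (k * θ) * sinc θ ^ s) (Ioo (-π) π) :=
  (continuous_const.mul (continuous_sinc.comp (continuous_const_mul k))).continuousOn.mul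
    (continuous_sinc.continuousOn.rpow_const fun _ hθ ↦ .inl (sinc_pos (abs_lt.2 hθ)).ne')

theorem intervalIntegrable_sin_mul_div_sin_rpow (k : ℝ) {s : ℝ} (hs : s < 2) :
    IntervalIntegrable (fun θ ↦ sin (k * θ) / sin θ ^ s) volume 0 (π / 2) := by
  have hpi := pi_pos
  have hcont : ContinuousOn (fun θ ↦ k * sinc (k * θ) * sinc θ ^ (-s)) (uIcc 0 (π / 2)) := by
    refine (continuousOn_sinc_mul_sinc_rpow k (-s)).mono ?_
    rw [uIcc_of_le pi_div_two_pos.le]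
    exact Icc_subset_Ioo (by linarith) (by linarith)
  refine ((intervalIntegrable_rpow' (by linarith : -1 < 1 + -s)).mul_continuousOn hcont).congr_uIoo
    fun θ hθ ↦ ?_
  rw [uIoo_of_le pi_div_two_pos.le] at hθ
  have hθ' : θ ∈ Ioo 0 π := Ioo_zero_pi_div_two_subset hθ
  simp only
  rw [← sin_mul_mul_sin_rpow hθ', rpow_neg (sin_pos_of_mem_Ioo hθ').le, div_eq_mul_inv]

theorem tendsto_sin_mul_mul_sin_rpow_zero (k : ℝ) {s : ℝ} (hs : -1 < s) :
    Tendsto (fun θ ↦ sin (k * θ) * sin θ ^ s) (𝓝[>] 0) (𝓝 0) := by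
  have hcont : ContinuousAt (fun θ ↦ θ ^ (1 + s) * (k * sinc (k * θ) * sinc θ ^ s)) 0 :=
    (continuousAt_rpow_const _ _ (.inr (by linarith))).mul
      ((continuousOn_sinc_mul_sinc_rpow k s).continuousAt
        (Ioo_mem_nhds (neg_lt_zero.2 pi_pos) pi_pos))
  have hlim := hcont.tendsto.mono_left (nhdsWithin_le_nhds (s := Ioi 0))
  rw [zero_rpow (by linarith), zero_mul] at hlim
  refine hlim.congr' ?_
  filter_upwards [Ioo_mem_nhdsGT pi_pos] with θ hθ
  exact (sin_mul_mul_sin_rpow hθ k s).symm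

theorem hasDerivAt_sin_mul_mul_sin_rpow (k α : ℝ) {θ : ℝ} (hθ : 0 < sin θ) :
    HasDerivAt (fun θ ↦ sin ((k + 1) * θ) * sin θ ^ (1 - 2 * α))
      ((k / 2 + 1 - α) * (sin ((k + 2) * θ) / sin θ ^ (2 * α)) -
        (k / 2 + α) * (sin (k * θ) / sin θ ^ (2 * α))) θ := by
  have hmul : HasDerivAt (fun θ ↦ sin ((k + 1) * θ)) (cos ((k + 1) * θ) * (k + 1)) θ := by
    simpa using ((hasDerivAt_id θ).const_mul (k + 1)).sin
  refine (hmul.mul ((hasDerivAt_sin θ).rpow_const (.inl hθ.ne'))).congr_deriv ?_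
  have hadd : sin ((k + 2) * θ) = sin ((k + 1) * θ) * cos θ + cos ((k + 1) * θ) * sin θ := by
    rw [← sin_add]; ring_nf
  have hsub : sin (k * θ) = sin ((k + 1) * θ) * cos θ - cos ((k + 1) * θ) * sin θ := by
    rw [← sin_sub]; ring_nf
  rw [hadd, hsub, show 1 - 2 * α - 1 = -(2 * α) by ring, rpow_neg hθ.le, rpow_sub hθ, rpow_one]
  ring

/-- The integral `I_{k,α}`, for an arbitrary real frequency `k`; it converges for `α < 1`. -/
noncomputable def sinQuotientIntegral (k α : ℝ) : ℝ :=
  ∫ θ in (0 : ℝ)..(π / 2), sin (k * θ) / sin θ ^ (2 * α)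

theorem sinQuotientIntegral_add_two (k : ℝ) {α : ℝ} (hα : α < 1) :
    (k / 2 + 1 - α) * sinQuotientIntegral (k + 2) α =
      (k / 2 + α) * sinQuotientIntegral k α + sin ((k + 1) * (π / 2)) := by
  have hint (k : ℝ) := intervalIntegrable_sin_mul_div_sin_rpow k (by linarith : 2 * α < 2)
  have hint_upper := (hint (k + 2)).const_mul (k / 2 + 1 - α)
  have hint_lower := (hint k).const_mul (k / 2 + α)
  have hzero := tendsto_sin_mul_mul_sin_rpow_zero (k + 1) (by linarith : -1 < 1 - 2 * α)
  have hpi_div_two : ContinuousAt (fun θ ↦ sin ((k + 1) * θ) * sin θ ^ (1 - 2 * α)) (π / 2) :=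
    (hasDerivAt_sin_mul_mul_sin_rpow k α (by simp)).continuousAt
  have hftc := integral_eq_sub_of_hasDerivAt_of_tendsto pi_div_two_pos
    (fun θ hθ ↦ hasDerivAt_sin_mul_mul_sin_rpow k α
      (sin_pos_of_mem_Ioo (Ioo_zero_pi_div_two_subset hθ)))
    (hint_upper.sub hint_lower) hzero (hpi_div_two.tendsto.mono_left nhdsWithin_le_nhds)
  rw [intervalIntegral.integral_sub hint_upper hint_lower, intervalIntegral.integral_const_mul,
    intervalIntegral.integral_const_mul, sin_pi_div_two, one_rpow, mul_one, sub_zero] at hftc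
  exact sub_eq_iff_eq_add'.1 hftc

theorem sinQuotientIntegral_one {α : ℝ} (hα : α < 1) :
    sinQuotientIntegral 1 α = √π / 2 * Gamma (1 - α) / Gamma (1 - α + 1 / 2) := by
  calc sinQuotientIntegral 1 α
      = ∫ θ in (0 : ℝ)..(π / 2), sin θ ^ (2 * (1 - α) - 1) * cos θ ^ (2 * (1 / 2 : ℝ) - 1) := by
        refine integral_congr_Ioo_of_le pi_div_two_pos.le fun θ hθ ↦ ?_
        have hsin : 0 < sin θ := sin_pos_of_mem_Ioo (Ioo_zero_pi_div_two_subset hθ)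
        simp only [one_mul]
        rw [show 2 * (1 - α) - 1 = 1 - 2 * α by ring, rpow_sub hsin, rpow_one]
        norm_num
    _ = beta (1 - α) (1 / 2) / 2 :=
        integral_sin_rpow_mul_cos_rpow (sub_pos.2 hα) one_half_pos
    _ = √π / 2 * Gamma (1 - α) / Gamma (1 - α + 1 / 2) := by
        rw [beta, Gamma_one_half_eq]
        ring

theorem sinQuotientIntegral_odd (n : ℕ) {α : ℝ} (hα : α < 1) (hpole : ∀ m : ℕ, α + 1 / 2 ≠ -m) :
    sinQuotientIntegral (2 * n + 1) α =
      √π / 2 * (Gamma (1 - α) * Gamma (α + (2 * n + 1) / 2)) /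
        (Gamma (α + 1 / 2) * Gamma (1 - α + (2 * n + 1) / 2)) := by
  induction n with
  | zero =>
    have hGamma : Gamma (α + 1 / 2) ≠ 0 := Gamma_ne_zero hpole
    simp only [Nat.cast_zero, mul_zero, zero_add]
    rw [sinQuotientIntegral_one hα, mul_comm (Gamma (α + 1 / 2)), ← mul_assoc,
      mul_div_mul_right _ _ hGamma]
  | succ n ih =>
    have hnum : α + (2 * n + 1) / 2 ≠ 0 := fun h ↦ hpole n (by linarith)
    have hden : 1 - α + (2 * n + 1) / 2 ≠ 0 := by
      have : 0 < 1 - α := sub_pos.2 hα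
      positivity
    have hboundary : sin ((2 * n + 1 + 1) * (π / 2)) = 0 := by
      rw [← sin_nat_mul_pi (n + 1)]
      push_cast
      ring_nf
    have hrec := sinQuotientIntegral_add_two (2 * n + 1) hα
    have hfreq : 2 * ((n + 1 : ℕ) : ℝ) + 1 = 2 * n + 1 + 2 := by push_cast; ring
    have hshift (x : ℝ) : x + (2 * n + 1 + 2) / 2 = x + (2 * n + 1) / 2 + 1 := by ring
    rw [hfreq, hshift, hshift, Gamma_add_one hnum, Gamma_add_one hden]
    calc sinQuotientIntegral (2 * n + 1 + 2) α
        = (α + (2 * n + 1) / 2) / (1 - α + (2 * n + 1) / 2) *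
            sinQuotientIntegral (2 * n + 1) α := by
          rw [div_mul_eq_mul_div, eq_div_iff hden]
          linear_combination hrec + hboundary
      _ = _ := by
          rw [ih, div_mul_div_comm]
          congr 1 <;> ring

end

theorem I_k_alpha_eval_general (k : ℕ) (hk : Odd k) (α : ℝ) (hα : α < 1)
    (hpole : ∀ m : ℕ, α + 1 / 2 ≠ -m) :
    ∫ θ in (0:ℝ)..(π/2), Real.sin (k * θ) / Real.sin θ ^ (2 * α) =
      Real.sqrt π / 2 *
        (Real.Gamma (1 - α) * Real.Gamma (α + k / 2)) /
        (Real.Gamma (α + 1/2) * Real.Gamma (1 - α + k / 2)) := by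
  obtain ⟨n, rfl⟩ := hk
  exact_mod_cast sinQuotientIntegral_odd n hα hpole

theorem I_k_alpha_eval (k : ℕ) (hk : Odd k) (hk1 : 1 ≤ k) (α : ℝ) (hα0 : 0 < α) (hα1 : α < 1) :
    ∫ θ in (0:ℝ)..(π/2), Real.sin (k * θ) / Real.sin θ ^ (2 * α) =
      Real.sqrt π / 2 *
        (Real.Gamma (1 - α) * Real.Gamma (α + k / 2)) /
        (Real.Gamma (α + 1/2) * Real.Gamma (1 - α + k / 2)) :=
  I_k_alpha_eval_general k hk α hα1 fun m ↦ by linarith [m.cast_nonneg (α := ℝ)]
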